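/- There is a uniform constant C such that for every h ∈ C₀^∞(ℝ₊×ℝ³) and every t ≥ 0: ‖⟨t−r⟩ ∇_x ∂h(t,·)‖₂ ≤ C Σ_{|α|≤1} ‖Γ^α h'(t,·)‖₂ + C‖⟨t+r⟩ □h(t,·)‖₂, where ∇_x ∂h denotes the collection of all second derivatives ∂_j ∂_a h with 1 ≤ j ≤ 3 and 0 ≤ a ≤ 3. -/

import Mathlib

open MeasureTheory Real Finset

noncomputable section

/-- Points of space-time `ℝ×ℝ³`, written `X = (x₀,x₁,x₂,x₃)` with `x₀ = t`. -/
abbrev Pt : Type := Fin 4 → ℝ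
/-- Points of space `ℝ³`. -/
abbrev Sp : Type := Fin 3 → ℝ

/-- Space-time partial derivative `∂_a`. -/
def pd (a : Fin 4) (u : Pt → ℝ) : Pt → ℝ := fun X => fderiv ℝ u X (Pi.single a 1)

/-- Rotation field `Ω_{ij} = x_i ∂_j - x_j ∂_i` (space-time indices). -/
def rot (i j : Fin 4) (u : Pt → ℝ) : Pt → ℝ := fun X => X i * pd j u X - X j * pd i u X

/-- Scaling field `S = t ∂_t + x·∇_x = x^a ∂_a`. -/
def scal (u : Pt → ℝ) : Pt → ℝ := fun X => ∑ a, X a * pd a u X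

/-- The eight vector fields `Γ = (∂, Ω, S)`. -/
def Gam : Fin 8 → (Pt → ℝ) → Pt → ℝ :=
  ![pd 0, pd 1, pd 2, pd 3, rot 1 2, rot 1 3, rot 2 3, scal]

/-- `Γ^α` for a multi-index `α` (a word in the eight fields) of length `m`. -/
def GamComp : ∀ {m : ℕ}, (Fin m → Fin 8) → (Pt → ℝ) → Pt → ℝ
  | 0, _, u => u
  | _ + 1, α, u => Gam (α 0) (GamComp (fun i => α i.succ) u)

/-- Euclidean length `r = |x|` of a spatial point. -/
def rad (x : Sp) : ℝ := Real.sqrt (∑ i, (x i) ^ 2)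

/-- Japanese bracket `⟨z⟩ = (1+z²)^{1/2}`. -/
def jb (z : ℝ) : ℝ := Real.sqrt (1 + z ^ 2)

/-- Euclidean norm `|∂u|` of the space-time gradient. -/
def gradNorm (u : Pt → ℝ) (X : Pt) : ℝ := Real.sqrt (∑ a, (pd a u X) ^ 2)

/-- The unit-speed d'Alembertian `□ = ∂_t² - Δ_x`. -/
def box1 (u : Pt → ℝ) : Pt → ℝ := fun X =>
  pd 0 (pd 0 u) X - ∑ j : Fin 3, pd j.succ (pd j.succ u) X

/-- The d'Alembertian `∂_t² - c²Δ_x` with speed `c`. -/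
def boxc (c : ℝ) (u : Pt → ℝ) : Pt → ℝ := fun X =>
  pd 0 (pd 0 u) X - c ^ 2 * ∑ j : Fin 3, pd j.succ (pd j.succ u) X

/-- Smooth with compact support. -/
def Tst (u : Pt → ℝ) : Prop := ContDiff ℝ (⊤ : ℕ∞) u ∧ HasCompactSupport u

theorem Tst.pd {u : Pt → ℝ} (hu : Tst u) (a : Fin 4) : Tst (pd a u) := by
  refine ⟨?_, hu.2.fderiv_apply ℝ _⟩
  exact (hu.1.fderiv_right (m := (⊤ : ℕ∞)) (by simp)).clm_apply contDiff_const

theorem Tst.mul_left {u f : Pt → ℝ} (hu : Tst u) (hf : ContDiff ℝ (⊤ : ℕ∞) f) :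
    Tst (fun X => f X * u X) :=
  ⟨hf.mul hu.1, hu.2.mul_left (f := f)⟩

theorem Tst.add {u v : Pt → ℝ} (hu : Tst u) (hv : Tst v) : Tst (fun X => u X + v X) :=
  ⟨hu.1.add hv.1, hu.2.add hv.2⟩

theorem Tst.sub {u v : Pt → ℝ} (hu : Tst u) (hv : Tst v) : Tst (fun X => u X - v X) :=
  ⟨hu.1.sub hv.1, hu.2.sub hv.2⟩

theorem contDiff_coord (a : Fin 4) : ContDiff ℝ (⊤ : ℕ∞) (fun X : Pt => X a) :=
  contDiff_apply ℝ ℝ a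

theorem Tst.rot {u : Pt → ℝ} (hu : Tst u) (i j : Fin 4) : Tst (rot i j u) :=
  ((hu.pd j).mul_left (contDiff_coord i)).sub ((hu.pd i).mul_left (contDiff_coord j))

theorem Tst.scal {u : Pt → ℝ} (hu : Tst u) : Tst (scal u) := by
  have h : _root_.scal u = fun X => ((X 0 * _root_.pd 0 u X + X 1 * _root_.pd 1 u X)
      + X 2 * _root_.pd 2 u X) + X 3 * _root_.pd 3 u X := by
    funext X; simp [_root_.scal, Fin.sum_univ_four]
  rw [h]
  exact ((((hu.pd 0).mul_left (contDiff_coord 0)).add ((hu.pd 1).mul_left (contDiff_coord 1))).add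
    ((hu.pd 2).mul_left (contDiff_coord 2))).add ((hu.pd 3).mul_left (contDiff_coord 3))

theorem Tst.gam {u : Pt → ℝ} (hu : Tst u) (k : Fin 8) : Tst (Gam k u) := by
  fin_cases k
  · exact hu.pd 0
  · exact hu.pd 1
  · exact hu.pd 2
  · exact hu.pd 3
  · exact hu.rot 1 2
  · exact hu.rot 1 3
  · exact hu.rot 2 3
  · exact hu.scal

theorem Tst.gamComp {m : ℕ} (α : Fin m → Fin 8) {u : Pt → ℝ} (hu : Tst u) :
    Tst (GamComp α u) := by
  induction m with
  | zero => exact hu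
  | succ m ih => exact (ih _).gam _

theorem pd_comm {u : Pt → ℝ} (hu : Tst u) (a b : Fin 4) (X : Pt) :
    pd a (pd b u) X = pd b (pd a u) X := by
  have hs : IsSymmSndFDerivAt ℝ u X :=
    (hu.1.contDiffAt).isSymmSndFDerivAt (by
      rw [minSmoothness_of_isRCLikeNormedField]; exact WithTop.coe_le_coe.2 (le_top : (2 : ℕ∞) ≤ ⊤))
  have hd : DifferentiableAt ℝ (fderiv ℝ u) X :=
    ((hu.1.fderiv_right (m := (⊤ : ℕ∞)) (by simp)).differentiable (by simp)) X
  have key : ∀ a b : Fin 4, pd a (pd b u) X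
      = fderiv ℝ (fderiv ℝ u) X (Pi.single a 1) (Pi.single b 1) := by
    intro a b
    unfold pd
    rw [fderiv_clm_apply hd (by fun_prop)]
    simp
  rw [key, key]
  exact hs _ _

theorem pd_mul {f g : Pt → ℝ} {X : Pt} (hf : DifferentiableAt ℝ f X) (hg : DifferentiableAt ℝ g X)
    (a : Fin 4) : pd a (fun X => f X * g X) X = pd a f X * g X + f X * pd a g X := by
  unfold pd
  rw [fderiv_fun_mul hf hg]
  simp
  ring

theorem isClosedEmbedding_slice (t : ℝ) :
    Topology.IsClosedEmbedding (fun x : Sp => (Fin.cons t x : Pt)) := by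
  refine Function.LeftInverse.isClosedEmbedding (f := fun X : Pt => fun i : Fin 3 => X i.succ)
    ?_ ?_ ?_
  · intro x; funext i; simp
  · fun_prop
  · exact Continuous.finCons continuous_const continuous_id

theorem cont_slice (t : ℝ) : Continuous (fun x : Sp => (Fin.cons t x : Pt)) :=
  (isClosedEmbedding_slice t).continuous

theorem slice_integrable {u : Pt → ℝ} (hu : Continuous u) (hc : HasCompactSupport u) (t : ℝ) :
    Integrable (fun x : Sp => u (Fin.cons t x)) :=
  (hu.comp (cont_slice t)).integrable_of_hasCompactSupport
    (hc.comp_isClosedEmbedding (isClosedEmbedding_slice t))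

theorem slice_weight_integrable {u : Pt → ℝ} {w : Sp → ℝ} (hw : Continuous w)
    (hu : Continuous u) (hc : HasCompactSupport u) (t : ℝ) :
    Integrable (fun x : Sp => w x * u (Fin.cons t x)) :=
  (hw.mul (hu.comp (cont_slice t))).integrable_of_hasCompactSupport
    (HasCompactSupport.mul_left (f := w)
      (hc.comp_isClosedEmbedding (isClosedEmbedding_slice t)))

theorem slice_div {G : Pt → ℝ} (hG : Tst G) (t : ℝ) (j : Fin 3) :
    ∫ x : Sp, pd j.succ G (Fin.cons t x) = 0 := by
  have h := integral_bilinear_hasLineDerivAt_right_eq_neg_left_of_integrable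
    (μ := (volume : Measure Sp)) (f := fun _ : Sp => (1 : ℝ)) (f' := fun _ => (0 : ℝ))
    (g := fun x : Sp => G (Fin.cons t x)) (g' := fun x : Sp => pd j.succ G (Fin.cons t x))
    (v := Pi.single j (1 : ℝ)) (B := ContinuousLinearMap.mul ℝ ℝ)
    (by simp)
    (by simpa using slice_integrable (hG.pd j.succ).1.continuous (hG.pd j.succ).2 t)
    (by simpa using slice_integrable hG.1.continuous hG.2 t)
    (by intro x _; simpa using hasFDerivAt_const (1 : ℝ) x |>.hasLineDerivAt _)
    (by
      intro x _
      have hd : HasFDerivAt G (fderiv ℝ G (Fin.cons t x)) (Fin.cons t x) :=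
        ((hG.1.differentiable (by simp)) _).hasFDerivAt
      have h1 := hd.hasLineDerivAt (Pi.single j.succ (1 : ℝ))
      unfold HasLineDerivAt at h1 ⊢
      have e : (fun s : ℝ => G (Fin.cons t (x + s • Pi.single j (1 : ℝ)) : Pt))
          = fun s : ℝ => G ((Fin.cons t x : Pt) + s • Pi.single j.succ (1 : ℝ)) := by
        funext s
        congr 1
        funext i
        refine Fin.cases ?_ (fun k => ?_) i
        · simp [Pi.single_apply, Fin.succ_ne_zero, eq_comm]
        · simp [Pi.single_apply]
      rw [e]
      exact h1)
  simpa using h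

theorem cont_rad : Continuous rad := by unfold rad; fun_prop

theorem cont_jb : Continuous jb := by unfold jb; fun_prop

theorem jb_sq (z : ℝ) : jb z ^ 2 = 1 + z ^ 2 := Real.sq_sqrt (by positivity)

/-- Regularised weight. -/
def rho (X : Pt) : ℝ := Real.sqrt (1 + (X 1 ^ 2 + X 2 ^ 2 + X 3 ^ 2))

def wt (t : ℝ) (X : Pt) : ℝ := 1 + (t - rho X) ^ 2

theorem contDiff_rho : ContDiff ℝ (⊤ : ℕ∞) rho := by
  unfold rho
  refine ContDiff.sqrt ?_ (fun X => by positivity)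
  have := contDiff_coord
  exact contDiff_const.add ((((this 1).pow 2).add ((this 2).pow 2)).add ((this 3).pow 2))

theorem contDiff_wt (t : ℝ) : ContDiff ℝ (⊤ : ℕ∞) (wt t) :=
  contDiff_const.add ((contDiff_const.sub contDiff_rho).pow 2)

theorem pd_coord (a b : Fin 4) (X : Pt) : pd a (fun X => X b) X = if b = a then 1 else 0 := by
  unfold pd
  rw [show (fun X : Pt => X b) = ⇑(ContinuousLinearMap.proj (R := ℝ) (φ := fun _ : Fin 4 => ℝ) b) from rfl,
    ContinuousLinearMap.fderiv]
  simp [Pi.single_apply]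

theorem rho_sq (X : Pt) : rho X ^ 2 = 1 + (X 1 ^ 2 + X 2 ^ 2 + X 3 ^ 2) :=
  Real.sq_sqrt (by positivity)

theorem rho_pos (X : Pt) : 0 < rho X := Real.sqrt_pos.2 (by positivity)

theorem pd_rho_bound (j : Fin 3) (X : Pt) : |pd j.succ rho X| ≤ 1 := by
  have hd : DifferentiableAt ℝ rho X := contDiff_rho.differentiable (by simp) X
  have hp := rho_pos X
  have h1 : pd j.succ (fun X => rho X * rho X) X = 2 * rho X * pd j.succ rho X := by
    rw [pd_mul hd hd]; ring
  have h2 : pd j.succ (fun X => rho X * rho X) X = 2 * X j.succ := by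
    have e : (fun X => rho X * rho X) = fun X : Pt => 1 + (X 1 * X 1 + X 2 * X 2 + X 3 * X 3) := by
      funext Y; have := rho_sq Y; nlinarith
    have hc : ∀ a : Fin 4, HasFDerivAt (fun X : Pt => X a)
        (ContinuousLinearMap.proj (R := ℝ) (φ := fun _ : Fin 4 => ℝ) a) X :=
      fun a => (ContinuousLinearMap.proj (R := ℝ) (φ := fun _ : Fin 4 => ℝ) a).hasFDerivAt
    have h3 := (((((hc 1).mul (hc 1)).add ((hc 2).mul (hc 2))).add ((hc 3).mul (hc 3))).const_add 1)
    rw [e]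
    unfold pd
    refine (congrArg (fun L => L (Pi.single j.succ (1 : ℝ))) h3.fderiv).trans ?_
    fin_cases j <;> simp [Pi.single_apply] <;> ring
  have h4 : |X j.succ| ≤ rho X := by
    apply abs_le_of_sq_le_sq _ hp.le
    rw [rho_sq]
    fin_cases j <;> simp <;> nlinarith [sq_nonneg (X 1), sq_nonneg (X 2), sq_nonneg (X 3)]
  have h5 : rho X * |pd j.succ rho X| = |X j.succ| := by
    have h6 : X j.succ = rho X * pd j.succ rho X := by linarith
    rw [h6, abs_mul, abs_of_pos hp]
  by_contra hcon
  push Not at hcon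
  nlinarith

theorem pd_wt_bound (t : ℝ) (j : Fin 3) (X : Pt) :
    (pd j.succ (wt t) X) ^ 2 ≤ 4 * wt t X := by
  have hd : HasFDerivAt rho (fderiv ℝ rho X) X :=
    (contDiff_rho.differentiable (by simp) X).hasFDerivAt
  have h1 : pd j.succ (wt t) X = -2 * (t - rho X) * pd j.succ rho X := by
    have h3 := (((hd.const_sub t).mul (hd.const_sub t)).const_add 1)
    have e : wt t = fun X => 1 + (t - rho X) * (t - rho X) := by
      funext Y; unfold wt; ring
    rw [e]
    unfold pd
    refine (congrArg (fun L => L (Pi.single j.succ (1 : ℝ))) h3.fderiv).trans ?_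
    simp
    ring
  have h2 := (sq_le_one_iff_abs_le_one _).2 (pd_rho_bound j X)
  rw [h1]
  unfold wt
  nlinarith [mul_nonneg (sq_nonneg (t - rho X)) (sub_nonneg.2 h2)]
theorem mul_bd {c g M e : ℝ} (hc : |c| ≤ M) (hg : |g| ≤ e) : -(M * e) ≤ c * g ∧ c * g ≤ M * e := by
  rw [← abs_le, abs_mul]
  exact mul_le_mul hc hg (abs_nonneg _) ((abs_nonneg _).trans hc)

theorem cancel_bd {t r z K e : ℝ} (ht : 0 ≤ t) (hr : 0 ≤ r) (he : 0 ≤ e) (hK : 0 ≤ K)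
    (h1 : -(K * ((t + r) * e)) ≤ (t ^ 2 - r ^ 2) * z) (h2 : (t ^ 2 - r ^ 2) * z ≤ K * ((t + r) * e)) :
    (t - r) ^ 2 * z ^ 2 ≤ K ^ 2 * e ^ 2 := by
  rcases (add_nonneg ht hr).eq_or_lt with h | h
  · have h3 : t = 0 := by linarith
    have h4 : r = 0 := by linarith
    subst h3 h4
    simp; positivity
  · have h3 : |(t + r) * ((t - r) * z)| ≤ (t + r) * (K * e) := by
      rw [abs_le]; constructor <;> linarith
    rw [abs_mul, abs_of_pos h] at h3
    have h4 := le_of_mul_le_mul_left h3 h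
    have := sq_le_sq' (by linarith [neg_abs_le ((t - r) * z), abs_nonneg ((t-r)*z)]) h4
    rw [sq_abs] at this
    linarith

theorem alg_KS {t r x1 x2 x3 e : ℝ} {A : Fin 4 → Fin 4 → ℝ} (ht : 0 ≤ t) (hr : 0 ≤ r) (he : 0 ≤ e)
    (hx : r ^ 2 = x1 ^ 2 + x2 ^ 2 + x3 ^ 2) (sym : ∀ a b, A a b = A b a)
    (hS : ∀ a, |t * A 0 a + x1 * A 1 a + x2 * A 2 a + x3 * A 3 a| ≤ e)
    (h12 : ∀ a, |x1 * A 2 a - x2 * A 1 a| ≤ e)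
    (h13 : ∀ a, |x1 * A 3 a - x3 * A 1 a| ≤ e)
    (h23 : ∀ a, |x2 * A 3 a - x3 * A 2 a| ≤ e)
    (hb : |(t + r) * (A 0 0 - (A 1 1 + A 2 2 + A 3 3))| ≤ e) :
    (t - r) ^ 2 * (A 1 1 + A 2 2 + A 3 3) ^ 2 ≤ 11 ^ 2 * e ^ 2 ∧
    (t - r) ^ 2 * A 1 0 ^ 2 ≤ 11 ^ 2 * e ^ 2 ∧ (t - r) ^ 2 * A 2 0 ^ 2 ≤ 11 ^ 2 * e ^ 2 ∧
    (t - r) ^ 2 * A 3 0 ^ 2 ≤ 11 ^ 2 * e ^ 2 := by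
  have b0 : |t| ≤ t + r := by rw [abs_of_nonneg ht]; linarith
  have b1 : |x1| ≤ t + r := (abs_le_of_sq_le_sq (by nlinarith [sq_nonneg x2, sq_nonneg x3]) hr).trans (by linarith)
  have b2 : |x2| ≤ t + r := (abs_le_of_sq_le_sq (by nlinarith [sq_nonneg x1, sq_nonneg x3]) hr).trans (by linarith)
  have b3 : |x3| ≤ t + r := (abs_le_of_sq_le_sq (by nlinarith [sq_nonneg x2, sq_nonneg x1]) hr).trans (by linarith)
  have hM : 0 ≤ (t + r) * e := by positivity
  set q := A 0 0 - (A 1 1 + A 2 2 + A 3 3) with hq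
  -- products `t * c * q`
  have bq : ∀ c, |c| ≤ t + r → -((t + r) * e) ≤ t * c * q ∧ t * c * q ≤ (t + r) * e := by
    intro c hc
    rw [← abs_le]
    calc |t * c * q| = |c| * (t * |q|) := by rw [abs_mul, abs_mul, abs_of_nonneg ht]; ring
      _ ≤ (t + r) * ((t + r) * |q|) := by
        apply mul_le_mul hc _ (by positivity) (by positivity)
        apply mul_le_mul_of_nonneg_right (by linarith) (abs_nonneg _)
      _ ≤ (t + r) * e := by
        rw [abs_mul, abs_of_nonneg (add_nonneg ht hr)] at hb
        exact mul_le_mul_of_nonneg_left hb (by positivity)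
  have s10 := sym 1 0
  have s20 := sym 2 0
  have s30 := sym 3 0
  have s21 := sym 2 1
  have s31 := sym 3 1
  have s32 := sym 3 2
  refine ⟨?_, ?_, ?_, ?_⟩
  · have id : (t ^ 2 - r ^ 2) * (A 1 1 + A 2 2 + A 3 3) =
        t * (t * A 0 0 + x1 * A 1 0 + x2 * A 2 0 + x3 * A 3 0)
        - x1 * (t * A 0 1 + x1 * A 1 1 + x2 * A 2 1 + x3 * A 3 1)
        - x2 * (t * A 0 2 + x1 * A 1 2 + x2 * A 2 2 + x3 * A 3 2)
        - x3 * (t * A 0 3 + x1 * A 1 3 + x2 * A 2 3 + x3 * A 3 3)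
        - x1 * (x1 * A 2 2 - x2 * A 1 2) - x1 * (x1 * A 3 3 - x3 * A 1 3)
        + x2 * (x1 * A 2 1 - x2 * A 1 1) - x2 * (x2 * A 3 3 - x3 * A 2 3)
        + x3 * (x1 * A 3 1 - x3 * A 1 1) + x3 * (x2 * A 3 2 - x3 * A 2 2)
        - t * t * q := by
      rw [hx, hq, s10, s20, s30, s21, s31, s32]; ring
    have c1 := mul_bd b0 (hS 0)
    have c2 := mul_bd b1 (hS 1)
    have c3 := mul_bd b2 (hS 2)
    have c4 := mul_bd b3 (hS 3)
    have c5 := mul_bd b1 (h12 2)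
    have c6 := mul_bd b1 (h13 3)
    have c7 := mul_bd b2 (h12 1)
    have c8 := mul_bd b2 (h23 3)
    have c9 := mul_bd b3 (h13 1)
    have c10 := mul_bd b3 (h23 2)
    have c11 := bq t b0
    apply cancel_bd ht hr he (by norm_num) <;> rw [id] <;> linarith
  · have id : (t ^ 2 - r ^ 2) * A 1 0 =
        t * (t * A 0 1 + x1 * A 1 1 + x2 * A 2 1 + x3 * A 3 1)
        + t * (x1 * A 2 2 - x2 * A 1 2) + t * (x1 * A 3 3 - x3 * A 1 3)
        - x1 * (t * A 0 0 + x1 * A 1 0 + x2 * A 2 0 + x3 * A 3 0)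
        + t * x1 * q
        + x2 * (x1 * A 2 0 - x2 * A 1 0) + x3 * (x1 * A 3 0 - x3 * A 1 0) := by
      rw [hx, hq, s10, s20, s30, s21, s31]; ring
    have c1 := mul_bd b0 (hS 1)
    have c2 := mul_bd b0 (h12 2)
    have c3 := mul_bd b0 (h13 3)
    have c4 := mul_bd b1 (hS 0)
    have c5 := bq x1 b1
    have c6 := mul_bd b2 (h12 0)
    have c7 := mul_bd b3 (h13 0)
    apply cancel_bd ht hr he (by norm_num) <;> rw [id] <;> linarith
  · have id : (t ^ 2 - r ^ 2) * A 2 0 =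
        t * (t * A 0 2 + x1 * A 1 2 + x2 * A 2 2 + x3 * A 3 2)
        - t * (x1 * A 2 1 - x2 * A 1 1) + t * (x2 * A 3 3 - x3 * A 2 3)
        - x2 * (t * A 0 0 + x1 * A 1 0 + x2 * A 2 0 + x3 * A 3 0)
        + t * x2 * q
        - x1 * (x1 * A 2 0 - x2 * A 1 0) + x3 * (x2 * A 3 0 - x3 * A 2 0) := by
      rw [hx, hq, s10, s20, s30, s21, s32]; ring
    have c1 := mul_bd b0 (hS 2)
    have c2 := mul_bd b0 (h12 1)
    have c3 := mul_bd b0 (h23 3)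
    have c4 := mul_bd b2 (hS 0)
    have c5 := bq x2 b2
    have c6 := mul_bd b1 (h12 0)
    have c7 := mul_bd b3 (h23 0)
    apply cancel_bd ht hr he (by norm_num) <;> rw [id] <;> linarith
  · have id : (t ^ 2 - r ^ 2) * A 3 0 =
        t * (t * A 0 3 + x1 * A 1 3 + x2 * A 2 3 + x3 * A 3 3)
        - t * (x1 * A 3 1 - x3 * A 1 1) - t * (x2 * A 3 2 - x3 * A 2 2)
        - x3 * (t * A 0 0 + x1 * A 1 0 + x2 * A 2 0 + x3 * A 3 0)
        + t * x3 * q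
        - x1 * (x1 * A 3 0 - x3 * A 1 0) - x2 * (x2 * A 3 0 - x3 * A 2 0) := by
      rw [hx, hq, s10, s20, s30, s31, s32]; ring
    have c1 := mul_bd b0 (hS 3)
    have c2 := mul_bd b0 (h13 1)
    have c3 := mul_bd b0 (h23 2)
    have c4 := mul_bd b3 (hS 0)
    have c5 := bq x3 b3
    have c6 := mul_bd b1 (h13 0)
    have c7 := mul_bd b2 (h23 0)
    apply cancel_bd ht hr he (by norm_num) <;> rw [id] <;> linarith
theorem err_bd {W w d D : ℝ} (hw : w ^ 2 ≤ 4 * W) :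
    |w * d * D| ≤ W * D ^ 2 / 8 + 8 * d ^ 2 := by
  have h := mul_nonneg (sub_nonneg.2 hw) (sq_nonneg D)
  rw [abs_le]
  constructor <;> nlinarith [sq_nonneg (w * D + 16 * d), sq_nonneg (w * D - 16 * d)]

/-- The divergence term in the weighted elliptic identity. -/
def dvg (t : ℝ) (h : Pt → ℝ) (X : Pt) : ℝ :=
  ∑ i : Fin 3, ∑ j : Fin 3,
    (pd i.succ (fun Y => (wt t Y * pd j.succ h Y) * pd i.succ (pd j.succ h) Y) X
      - pd j.succ (fun Y => (wt t Y * pd j.succ h Y) * pd i.succ (pd i.succ h) Y) X)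

theorem Tst.flux {h : Pt → ℝ} (hh : Tst h) (t : ℝ) (j : Fin 4) {v : Pt → ℝ} (hv : Tst v) :
    Tst (fun Y => (wt t Y * _root_.pd j h Y) * v Y) :=
  hv.mul_left ((contDiff_wt t).mul (hh.pd j).1)

theorem pd_flux {h : Pt → ℝ} (hh : Tst h) (t : ℝ) (i j : Fin 4) {v : Pt → ℝ} (hv : Tst v) (X : Pt) :
    pd i (fun Y => (wt t Y * pd j h Y) * v Y) X
      = pd i (wt t) X * pd j h X * v X + wt t X * pd i (pd j h) X * v X
        + wt t X * pd j h X * pd i v X := by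
  have h1 := (contDiff_wt t).differentiable (by simp) X
  have h2 := (hh.pd j).1.differentiable (by simp) X
  rw [pd_mul (f := fun Y => wt t Y * pd j h Y) (h1.mul h2) (hv.1.differentiable (by simp) X), pd_mul h1 h2]
  ring

theorem integral_dvg {h : Pt → ℝ} (hh : Tst h) (t : ℝ) :
    Integrable (fun x : Sp => dvg t h (Fin.cons t x)) ∧ ∫ x : Sp, dvg t h (Fin.cons t x) = 0 := by
  have key : ∀ i j : Fin 3, Integrable (fun x : Sp =>
      pd i.succ (fun Y => (wt t Y * pd j.succ h Y) * pd i.succ (pd j.succ h) Y) (Fin.cons t x)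
      - pd j.succ (fun Y => (wt t Y * pd j.succ h Y) * pd i.succ (pd i.succ h) Y) (Fin.cons t x))
      ∧ ∫ x : Sp,
      (pd i.succ (fun Y => (wt t Y * pd j.succ h Y) * pd i.succ (pd j.succ h) Y) (Fin.cons t x)
      - pd j.succ (fun Y => (wt t Y * pd j.succ h Y) * pd i.succ (pd i.succ h) Y) (Fin.cons t x))
        = 0 := by
    intro i j
    have f1 := hh.flux t j.succ ((hh.pd j.succ).pd i.succ)
    have f2 := hh.flux t j.succ ((hh.pd i.succ).pd i.succ)
    have i1 := slice_integrable (f1.pd i.succ).1.continuous (f1.pd i.succ).2 t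
    have i2 := slice_integrable (f2.pd j.succ).1.continuous (f2.pd j.succ).2 t
    refine ⟨i1.sub i2, ?_⟩
    rw [integral_sub i1 i2, slice_div f1, slice_div f2, sub_zero]
  unfold dvg
  refine ⟨integrable_finsetSum _ fun i _ => integrable_finsetSum _ fun j _ => (key i j).1, ?_⟩
  rw [integral_finsetSum _ fun i _ => integrable_finsetSum _ fun j _ => (key i j).1]
  refine Finset.sum_eq_zero fun i _ => ?_
  rw [integral_finsetSum _ fun j _ => (key i j).1]
  exact Finset.sum_eq_zero fun j _ => (key i j).2

theorem ell_pt {h : Pt → ℝ} (hh : Tst h) (t : ℝ) (X : Pt) :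
    wt t X * ∑ i : Fin 3, ∑ j : Fin 3, (pd i.succ (pd j.succ h) X) ^ 2
      ≤ 2 * (wt t X * (∑ i : Fin 3, pd i.succ (pd i.succ h) X) ^ 2) + 2 * dvg t h X
        + 96 * ∑ j : Fin 3, (pd j.succ h X) ^ 2 := by
  have hd : dvg t h X = ∑ i : Fin 3, ∑ j : Fin 3,
      ((pd i.succ (wt t) X * pd j.succ h X * pd i.succ (pd j.succ h) X
        + wt t X * pd i.succ (pd j.succ h) X * pd i.succ (pd j.succ h) X)
       - (pd j.succ (wt t) X * pd j.succ h X * pd i.succ (pd i.succ h) X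
        + wt t X * pd j.succ (pd j.succ h) X * pd i.succ (pd i.succ h) X)) := by
    unfold dvg
    refine Finset.sum_congr rfl fun i _ => Finset.sum_congr rfl fun j _ => ?_
    rw [pd_flux hh t _ _ ((hh.pd j.succ).pd i.succ), pd_flux hh t _ _ ((hh.pd i.succ).pd i.succ)]
    have e1 : pd i.succ (pd i.succ (pd j.succ h)) X = pd j.succ (pd i.succ (pd i.succ h)) X := by
      have : pd i.succ (pd j.succ h) = pd j.succ (pd i.succ h) := funext fun Y => pd_comm hh _ _ Y
      rw [this, pd_comm (hh.pd i.succ)]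
    rw [e1]; ring
  have hw := fun j => pd_wt_bound t j X
  have hWp : 0 ≤ wt t X := by unfold wt; positivity
  generalize hW : wt t X = W at *
  generalize hD : (fun i j : Fin 3 => pd i.succ (pd j.succ h) X) = D
  generalize hv : (fun j : Fin 3 => pd j.succ h X) = d
  generalize hv' : (fun j : Fin 3 => pd j.succ (wt t) X) = w
  replace hD : ∀ i j : Fin 3, pd i.succ (pd j.succ h) X = D i j := fun i j => by rw [← hD]
  replace hv : ∀ j : Fin 3, pd j.succ h X = d j := fun j => by rw [← hv]
  replace hv' : ∀ j : Fin 3, pd j.succ (wt t) X = w j := fun j => by rw [← hv']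
  simp only [hD, hv, hv'] at *
  have hdv : dvg t h X = (∑ i, ∑ j, w i * d j * D i j) + W * (∑ i, ∑ j, D i j ^ 2)
      - (∑ i, ∑ j, w j * d j * D i i) - W * (∑ i, D i i) ^ 2 := by
    rw [hd]; simp only [Fin.sum_univ_three]; ring
  have E1 : -(∑ i, ∑ j, w i * d j * D i j) ≤ ∑ i, ∑ j, (W * D i j ^ 2 / 8 + 8 * d j ^ 2) := by
    rw [← Finset.sum_neg_distrib]
    refine Finset.sum_le_sum fun i _ => ?_
    rw [← Finset.sum_neg_distrib]
    refine Finset.sum_le_sum fun j _ => ?_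
    exact (neg_le_abs _).trans (err_bd (hw i))
  have E2 : (∑ i, ∑ j, w j * d j * D i i) ≤ ∑ i, ∑ j : Fin 3, (W * D i i ^ 2 / 8 + 8 * d j ^ 2) := by
    refine Finset.sum_le_sum fun i _ => Finset.sum_le_sum fun j _ => ?_
    exact (le_abs_self _).trans (err_bd (hw j))
  have P : ∀ i j, 0 ≤ W * D i j ^ 2 := fun i j => by positivity
  have p1 := P 0 1
  have p2 := P 0 2
  have p3 := P 1 0
  have p4 := P 1 2
  have p5 := P 2 0
  have p6 := P 2 1
  rw [hdv]
  simp only [Fin.sum_univ_three] at E1 E2 ⊢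
  linarith

/-- The pointwise right-hand side density. -/
def ksDens (h : Pt → ℝ) (t : ℝ) (x : Sp) : ℝ :=
  (∑ m ∈ Finset.range 2, ∑ α : Fin m → Fin 8, ∑ a, (GamComp α (pd a h) (Fin.cons t x)) ^ 2)
    + jb (t + rad x) ^ 2 * (box1 h (Fin.cons t x)) ^ 2

theorem dens_gam (h : Pt → ℝ) (t : ℝ) (x : Sp) {m : ℕ} (hm : m ∈ Finset.range 2) (α : Fin m → Fin 8)
    (a : Fin 4) : (GamComp α (pd a h) (Fin.cons t x)) ^ 2 ≤ ksDens h t x := by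
  have h1 : (GamComp α (pd a h) (Fin.cons t x)) ^ 2
      ≤ ∑ a, (GamComp α (pd a h) (Fin.cons t x)) ^ 2 :=
    Finset.single_le_sum (f := fun a => (GamComp α (pd a h) (Fin.cons t x)) ^ 2)
      (fun _ _ => sq_nonneg _) (Finset.mem_univ a)
  have h2 : ∑ a, (GamComp α (pd a h) (Fin.cons t x)) ^ 2
      ≤ ∑ α : Fin m → Fin 8, ∑ a, (GamComp α (pd a h) (Fin.cons t x)) ^ 2 :=
    Finset.single_le_sum (f := fun α : Fin m → Fin 8 => ∑ a, (GamComp α (pd a h) (Fin.cons t x)) ^ 2)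
      (fun _ _ => Finset.sum_nonneg fun _ _ => sq_nonneg _) (Finset.mem_univ α)
  have h3 : ∑ α : Fin m → Fin 8, ∑ a, (GamComp α (pd a h) (Fin.cons t x)) ^ 2
      ≤ ∑ m ∈ Finset.range 2, ∑ α : Fin m → Fin 8, ∑ a, (GamComp α (pd a h) (Fin.cons t x)) ^ 2 :=
    Finset.single_le_sum
      (f := fun m => ∑ α : Fin m → Fin 8, ∑ a, (GamComp α (pd a h) (Fin.cons t x)) ^ 2)
      (fun _ _ => Finset.sum_nonneg fun _ _ => Finset.sum_nonneg fun _ _ => sq_nonneg _) hm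
  have h4 : 0 ≤ jb (t + rad x) ^ 2 * (box1 h (Fin.cons t x)) ^ 2 := by positivity
  unfold ksDens
  linarith

theorem fin_alg {t r ρ E V A11 A22 A33 A10 A20 A30 Sg g1 g2 g3 : ℝ} (hr : 0 ≤ r) (hrp : 0 < ρ)
    (hrho : ρ ^ 2 = 1 + r ^ 2) (hE : 0 ≤ E)
    (q11 : A11 ^ 2 ≤ E) (q22 : A22 ^ 2 ≤ E) (q33 : A33 ^ 2 ≤ E)
    (q10 : A10 ^ 2 ≤ E) (q20 : A20 ^ 2 ≤ E) (q30 : A30 ^ 2 ≤ E)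
    (gd1 : g1 ≤ E) (gd2 : g2 ≤ E) (gd3 : g3 ≤ E) (hSp : 0 ≤ Sg)
    (k0 : (t - r) ^ 2 * (A11 + A22 + A33) ^ 2 ≤ 11 ^ 2 * E)
    (k1 : (t - r) ^ 2 * A10 ^ 2 ≤ 11 ^ 2 * E) (k2 : (t - r) ^ 2 * A20 ^ 2 ≤ 11 ^ 2 * E)
    (k3 : (t - r) ^ 2 * A30 ^ 2 ≤ 11 ^ 2 * E)
    (hell : (1 + (t - ρ) ^ 2) * Sg ≤ 2 * ((1 + (t - ρ) ^ 2) * (A11 + A22 + A33) ^ 2) + 2 * V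
      + 96 * (g1 + g2 + g3)) :
    (1 + (t - r) ^ 2) * (Sg + (A10 ^ 2 + A20 ^ 2 + A30 ^ 2)) ≤ 3600 * E + 6 * V := by
  have r1 : r ≤ ρ := abs_le_of_sq_le_sq' (by linarith) hrp.le |>.2
  have r2 : ρ ≤ r + 1 := abs_le_of_sq_le_sq' (by nlinarith) (by linarith) |>.2
  have w1 : 1 + (t - r) ^ 2 ≤ 3 * (1 + (t - ρ) ^ 2) := by
    nlinarith [sq_nonneg (t - ρ - (ρ - r))]
  have w2 : 1 + (t - ρ) ^ 2 ≤ 3 + 2 * (t - r) ^ 2 := by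
    nlinarith [sq_nonneg (t - r + (ρ - r))]
  have d2 : (A11 + A22 + A33) ^ 2 ≤ 9 * E := by
    nlinarith [sq_nonneg (A11 - A22), sq_nonneg (A11 - A33), sq_nonneg (A22 - A33)]
  have WD : (1 + (t - ρ) ^ 2) * (A11 + A22 + A33) ^ 2 ≤ 27 * E + 242 * E := by
    have := mul_le_mul_of_nonneg_right w2 (sq_nonneg (A11 + A22 + A33))
    linarith
  have m1 := mul_le_mul_of_nonneg_right w1 hSp
  linarith

theorem main_pt {h : Pt → ℝ} (hh : Tst h) {t : ℝ} (ht : 0 ≤ t) (x : Sp) :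
    jb (t - rad x) ^ 2 * ∑ j : Fin 3, ∑ a : Fin 4, (pd j.succ (pd a h) (Fin.cons t x)) ^ 2
      ≤ 3600 * ksDens h t x + 6 * dvg t h (Fin.cons t x) := by
  have g0 : ∀ a, (pd a h (Fin.cons t x)) ^ 2 ≤ ksDens h t x := fun a =>
    dens_gam h t x (m := 0) (by simp) ![] a
  have g1 : ∀ k a, (Gam k (pd a h) (Fin.cons t x)) ^ 2 ≤ ksDens h t x := fun k a =>
    dens_gam h t x (m := 1) (by simp) ![k] a
  have g2 : (1 + (t + rad x) ^ 2) * (box1 h (Fin.cons t x)) ^ 2 ≤ ksDens h t x := by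
    rw [← jb_sq]
    unfold ksDens
    have : 0 ≤ ∑ m ∈ Finset.range 2, ∑ α : Fin m → Fin 8, ∑ a,
      (GamComp α (pd a h) (Fin.cons t x)) ^ 2 :=
      Finset.sum_nonneg fun _ _ => Finset.sum_nonneg fun _ _ => Finset.sum_nonneg fun _ _ =>
        sq_nonneg _
    linarith
  have hE : 0 ≤ ksDens h t x := (sq_nonneg _).trans (g0 0)
  have hr : 0 ≤ rad x := Real.sqrt_nonneg _
  have hr2 : rad x ^ 2 = x 0 ^ 2 + x 1 ^ 2 + x 2 ^ 2 := by
    unfold rad; rw [Real.sq_sqrt (Finset.sum_nonneg fun _ _ => sq_nonneg _), Fin.sum_univ_three]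
  have hX1 : (Fin.cons t x : Pt) 1 = x 0 := rfl
  have hX2 : (Fin.cons t x : Pt) 2 = x 1 := rfl
  have hX3 : (Fin.cons t x : Pt) 3 = x 2 := rfl
  have hX0 : (Fin.cons t x : Pt) 0 = t := rfl
  have hrho := rho_sq (Fin.cons t x)
  have hrp := rho_pos (Fin.cons t x)
  have hell := ell_pt hh t (Fin.cons t x)
  rw [hX1, hX2, hX3, ← hr2] at hrho
  have hwt : wt t (Fin.cons t x) = 1 + (t - rho (Fin.cons t x)) ^ 2 := rfl
  have bd : ∀ z : ℝ, z ^ 2 ≤ ksDens h t x → |z| ≤ Real.sqrt (ksDens h t x) := fun z hz =>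
    Real.abs_le_sqrt hz
  have hsq := Real.sq_sqrt hE
  have KS := alg_KS (t := t) (r := rad x) (x1 := x 0) (x2 := x 1) (x3 := x 2)
    (e := Real.sqrt (ksDens h t x)) (A := fun a b => pd a (pd b h) (Fin.cons t x))
    ht hr (Real.sqrt_nonneg _) hr2 (fun a b => pd_comm hh a b _)
    (fun a => bd _ (by simpa [Gam, scal, Fin.sum_univ_four, hX1, hX2, hX3, hX0] using g1 7 a))
    (fun a => bd _ (by simpa [Gam, rot, hX1, hX2] using g1 4 a))
    (fun a => bd _ (by simpa [Gam, rot, hX1, hX3] using g1 5 a))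
    (fun a => bd _ (by simpa [Gam, rot, hX2, hX3] using g1 6 a))
    (bd _ (by
      have e : box1 h (Fin.cons t x) = pd 0 (pd 0 h) (Fin.cons t x) -
        (pd 1 (pd 1 h) (Fin.cons t x) + pd 2 (pd 2 h) (Fin.cons t x)
          + pd 3 (pd 3 h) (Fin.cons t x)) := by
        simp [box1, Fin.sum_univ_three]
      rw [← e, mul_pow]
      nlinarith [sq_nonneg (box1 h (Fin.cons t x))]))
  rw [hsq] at KS
  obtain ⟨k0, k1, k2, k3⟩ := KS
  have p1 : ∀ a, (pd 1 (pd a h) (Fin.cons t x)) ^ 2 ≤ ksDens h t x := fun a => g1 1 a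
  have p2 : ∀ a, (pd 2 (pd a h) (Fin.cons t x)) ^ 2 ≤ ksDens h t x := fun a => g1 2 a
  have p3 : ∀ a, (pd 3 (pd a h) (Fin.cons t x)) ^ 2 ≤ ksDens h t x := fun a => g1 3 a
  have gd1 := g0 1
  have gd2 := g0 2
  have gd3 := g0 3
  rw [jb_sq]
  generalize dvg t h (Fin.cons t x) = V at *
  have s1 : (Fin.succ (0 : Fin 3)) = 1 := rfl
  have s2 : (Fin.succ (1 : Fin 3)) = 2 := rfl
  have s3 : (Fin.succ (2 : Fin 3)) = 3 := rfl
  simp only [Fin.sum_univ_three, Fin.sum_univ_four, s1, s2, s3] at hell ⊢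
  clear g0 g1 g2 bd
  generalize ksDens h t x = E at *
  generalize rho (Fin.cons t x) = ρ at *
  generalize rad x = r at *
  rw [hwt] at hell
  have q11 := p1 1
  have q22 := p2 2
  have q33 := p3 3
  have q10 := p1 0
  have q20 := p2 0
  have q30 := p3 0
  generalize pd 1 (pd 1 h) (Fin.cons t x) = A11 at *
  generalize pd 2 (pd 2 h) (Fin.cons t x) = A22 at *
  generalize pd 3 (pd 3 h) (Fin.cons t x) = A33 at *
  generalize pd 1 (pd 0 h) (Fin.cons t x) = A10 at *
  generalize pd 2 (pd 0 h) (Fin.cons t x) = A20 at *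
  generalize pd 3 (pd 0 h) (Fin.cons t x) = A30 at *
  clear p1 p2 p3
  set Sg := A11 ^ 2 + pd 1 (pd 2 h) (Fin.cons t x) ^ 2 + pd 1 (pd 3 h) (Fin.cons t x) ^ 2 +
    (pd 2 (pd 1 h) (Fin.cons t x) ^ 2 + A22 ^ 2 + pd 2 (pd 3 h) (Fin.cons t x) ^ 2) +
    (pd 3 (pd 1 h) (Fin.cons t x) ^ 2 + pd 3 (pd 2 h) (Fin.cons t x) ^ 2 + A33 ^ 2) with hSg
  have hSp : 0 ≤ Sg := by positivity
  have fin := fin_alg hr hrp hrho hE q11 q22 q33 q10 q20 q30 gd1 gd2 gd3 hSp k0 k1 k2 k3 hell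
  refine le_trans (le_of_eq ?_) fin
  rw [hSg]; ring

theorem sqrt_add_le' (a b : ℝ) : Real.sqrt (a + b) ≤ Real.sqrt a + Real.sqrt b := by
  rcases le_total 0 a with ha | ha
  · rcases le_total 0 b with hb | hb
    · refine Real.sqrt_le_iff.2 ⟨by positivity, ?_⟩
      nlinarith [Real.sq_sqrt ha, Real.sq_sqrt hb, mul_nonneg (Real.sqrt_nonneg a) (Real.sqrt_nonneg b)]
    · exact (Real.sqrt_le_sqrt (by linarith : a + b ≤ a)).trans (by linarith [Real.sqrt_nonneg b])
  · exact (Real.sqrt_le_sqrt (by linarith : a + b ≤ b)).trans (by linarith [Real.sqrt_nonneg a])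

theorem sqrt_sum_le' {ι : Type*} (s : Finset ι) (f : ι → ℝ) :
    Real.sqrt (∑ i ∈ s, f i) ≤ ∑ i ∈ s, Real.sqrt (f i) :=
  Finset.le_sum_of_subadditive Real.sqrt (by simp) sqrt_add_le' s f

/-- inequality (3.3) of the paper.  For `h ∈ C₀^∞(ℝ₊×ℝ³)` and `t ≥ 0`,
`‖⟨t-r⟩∇_x ∂h(t,·)‖₂ ≤ C Σ_{|α|≤1}‖Γ^α h'(t,·)‖₂ + C‖⟨t+r⟩□h(t,·)‖₂`. -/
theorem stmt_9 :
    ∃ C : ℝ, 0 < C ∧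
      ∀ (h : Pt → ℝ), ContDiff ℝ (⊤ : ℕ∞) h → HasCompactSupport h →
        (∀ X : Pt, X 0 < 0 → h X = 0) →
        ∀ t : ℝ, 0 ≤ t →
          (∫ x : Sp, jb (t - rad x) ^ 2 *
              ∑ j : Fin 3, ∑ a : Fin 4, (pd j.succ (pd a h) (Fin.cons t x)) ^ 2) ^ ((1:ℝ)/2)
            ≤ C * ∑ m ∈ Finset.range 2, ∑ α : Fin m → Fin 8,
                (∫ x : Sp, ∑ a, (GamComp α (pd a h) (Fin.cons t x)) ^ 2) ^ ((1:ℝ)/2)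
              + C * (∫ x : Sp,
                  jb (t + rad x) ^ 2 * (box1 h (Fin.cons t x)) ^ 2) ^ ((1:ℝ)/2) := by
  refine ⟨60, by norm_num, ?_⟩
  intro h hs hc _ t ht
  have hh : Tst h := ⟨hs, hc⟩
  simp only [← Real.sqrt_eq_rpow]
  have sq_int : ∀ {u : Pt → ℝ}, Tst u → Integrable (fun x : Sp => (u (Fin.cons t x)) ^ 2) := by
    intro u hu
    have h1 := hu.mul_left hu.1
    simpa [pow_two] using slice_integrable h1.1.continuous h1.2 t
  have wsq_int : ∀ {u : Pt → ℝ} {w : Sp → ℝ}, Tst u → Continuous w →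
      Integrable (fun x : Sp => w x * (u (Fin.cons t x)) ^ 2) := by
    intro u w hu hw
    have h1 := hu.mul_left hu.1
    simpa [pow_two] using slice_weight_integrable hw h1.1.continuous h1.2 t
  have hbox : Tst (box1 h) := by
    have e : box1 h = fun X => pd 0 (pd 0 h) X -
        ((pd 1 (pd 1 h) X + pd 2 (pd 2 h) X) + pd 3 (pd 3 h) X) := by
      funext X; simp [box1, Fin.sum_univ_three]
    rw [e]
    exact ((hh.pd 0).pd 0).sub ((((hh.pd 1).pd 1).add ((hh.pd 2).pd 2)).add ((hh.pd 3).pd 3))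
  have cm : Continuous (fun x : Sp => jb (t - rad x) ^ 2) :=
    (cont_jb.comp (continuous_const.sub cont_rad)).pow 2
  have cp : Continuous (fun x : Sp => jb (t + rad x) ^ 2) :=
    (cont_jb.comp (continuous_const.add cont_rad)).pow 2
  have iJ := wsq_int hbox cp
  have iL : Integrable (fun x : Sp => jb (t - rad x) ^ 2 *
      ∑ j : Fin 3, ∑ a : Fin 4, (pd j.succ (pd a h) (Fin.cons t x)) ^ 2) := by
    simp only [Finset.mul_sum]
    exact integrable_finsetSum _ fun j _ => integrable_finsetSum _ fun a _ =>
      wsq_int ((hh.pd a).pd j.succ) cm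
  have iG : ∀ {m : ℕ} (α : Fin m → Fin 8),
      Integrable (fun x : Sp => ∑ a, (GamComp α (pd a h) (Fin.cons t x)) ^ 2) := fun α =>
    integrable_finsetSum _ fun a _ => sq_int ((hh.pd a).gamComp α)
  have iGs : ∀ m ∈ Finset.range 2, Integrable (fun x : Sp => ∑ α : Fin m → Fin 8,
      ∑ a, (GamComp α (pd a h) (Fin.cons t x)) ^ 2) := fun m _ =>
    integrable_finsetSum _ fun α _ => iG α
  have iGG := integrable_finsetSum _ iGs
  have iD : Integrable (fun x : Sp => ksDens h t x) := iGG.add iJ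
  have eD : ∫ x : Sp, ksDens h t x = (∑ m ∈ Finset.range 2, ∑ α : Fin m → Fin 8,
      ∫ x : Sp, ∑ a, (GamComp α (pd a h) (Fin.cons t x)) ^ 2)
      + ∫ x : Sp, jb (t + rad x) ^ 2 * (box1 h (Fin.cons t x)) ^ 2 := by
    unfold ksDens
    rw [integral_add iGG iJ, integral_finsetSum _ iGs]
    congr 1
    exact Finset.sum_congr rfl fun m _ => integral_finsetSum _ fun α _ => iG α
  obtain ⟨iV, eV⟩ := integral_dvg hh t
  have main := integral_mono iL ((iD.const_mul 3600).add (iV.const_mul 6))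
    (fun x => main_pt hh ht x)
  simp only [Pi.add_apply] at main
  rw [integral_add (iD.const_mul 3600) (iV.const_mul 6), integral_const_mul, integral_const_mul,
    eV, mul_zero, add_zero] at main
  have s60 : Real.sqrt 3600 = 60 := by
    rw [show (3600 : ℝ) = 60 ^ 2 by norm_num]; exact Real.sqrt_sq (by norm_num)
  refine (Real.sqrt_le_sqrt main).trans ?_
  rw [Real.sqrt_mul (by norm_num), s60, ← mul_add, eD]
  refine mul_le_mul_of_nonneg_left ?_ (by norm_num)
  refine (sqrt_add_le' _ _).trans (add_le_add_left ?_ _)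
  refine (sqrt_sum_le' _ _).trans (Finset.sum_le_sum fun m _ => ?_)
  exact sqrt_sum_le' _ _
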